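/- arXiv:1404.7348 — 2 statements merged into one kernel-verified Lean document; each statement's English description precedes it below -/
import Mathlib

section
/- Let G ~ G(n,p) be the Erdős–Rényi random graph on n labelled vertices with edge probability p, and let χ(G) denote its chromatic number. Then for any λ > 0, Pr[|χ(G) - E[χ(G)]| > λ√(n-1)] < 2·exp(-λ²/2). -/
open MeasureTheory

/-- The Bernoulli measure on `Bool` with success probability `p`. -/
noncomputable def bernoulliMeasure (p : ℝ) : Measure Bool :=
  ENNReal.ofReal p • Measure.dirac true + ENNReal.ofReal (1 - p) • Measure.dirac false

/-- The Erdős–Rényi measure `G(n,p)`: each potential edge is present independently with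
probability `p`, encoded as a product measure on edge indicator functions. -/
noncomputable def gnp (n : ℕ) (p : ℝ) : Measure (Sym2 (Fin n) → Bool) :=
  Measure.pi fun _ => bernoulliMeasure p

/-- The simple graph determined by an edge indicator function. -/
def graphOf {n : ℕ} (ω : Sym2 (Fin n) → Bool) : SimpleGraph (Fin n) :=
  SimpleGraph.fromRel fun u v => ω s(u, v) = true

/-- The chromatic number of the graph determined by `ω`, as a real number. -/
noncomputable def chi {n : ℕ} (ω : Sym2 (Fin n) → Bool) : ℝ :=
  ((graphOf ω).chromaticNumber.toNat : ℝ)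

open ProbabilityTheory (HasSubgaussianMGF hasSubgaussianMGF_of_mem_Icc mgf)

theorem chi_aux {n : ℕ} (ω ω' : Sym2 (Fin n) → Bool) (w : Fin n)
    (h : ∀ u v, u ≠ v → u ≠ w → v ≠ w → ω s(u, v) = ω' s(u, v)) :
    chi ω' ≤ chi ω + 1 := by
  have h1 : (graphOf ω).Colorable (graphOf ω).chromaticNumber.toNat :=
    SimpleGraph.colorable_chromaticNumber (SimpleGraph.colorable_of_fintype _)
  obtain ⟨c⟩ := h1
  have h2 : (graphOf ω').Colorable ((graphOf ω).chromaticNumber.toNat + 1) := by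
    have : (graphOf ω').Coloring (Option (Fin (graphOf ω).chromaticNumber.toNat)) := by
      refine SimpleGraph.Coloring.mk (fun v => if v = w then none else some (c v)) ?_
      intro u v huv
      have hne : u ≠ v := huv.ne
      by_cases hu : u = w
      · have hv : ¬ v = w := fun hv => hne (hu.trans hv.symm)
        simp [hu, hv]
      · by_cases hv : v = w
        · simp [hu, hv]
        · simp only [hu, hv, if_false]
          intro e
          have e' := Option.some.inj e
          refine c.valid ?_ e'
          simp only [graphOf, SimpleGraph.fromRel_adj] at huv ⊢
          rw [h u v hne hu hv, h v u hne.symm hv hu]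
          exact huv
    have h3 := this.colorable
    simpa using h3
  have h4 := h2.chromaticNumber_le
  have h5 := ENat.toNat_le_of_le_natCast h4
  unfold chi
  exact_mod_cast h5

theorem chi_lip {n : ℕ} (ω ω' : Sym2 (Fin n) → Bool) (w : Fin n)
    (h : ∀ u v, u ≠ v → u ≠ w → v ≠ w → ω s(u, v) = ω' s(u, v)) :
    |chi ω - chi ω'| ≤ 1 := by
  have h1 := chi_aux ω ω' w h
  have h2 := chi_aux ω' ω w (fun u v a b c => (h u v a b c).symm)
  rw [abs_le]
  constructor <;> linarith

theorem bern_prob (p : ℝ) (hp0 : 0 ≤ p) (hp1 : p ≤ 1) :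
    IsProbabilityMeasure (bernoulliMeasure p) := by
  constructor
  simp only [bernoulliMeasure, Measure.coe_add, Measure.coe_smul, Pi.add_apply, Pi.smul_apply,
    measure_univ, smul_eq_mul, mul_one]
  rw [← ENNReal.ofReal_add hp0 (by linarith)]
  simp

section blocks

variable {E : Type*} [Fintype E]

open Classical in
/-- Resample the coordinates in `S`. -/
noncomputable def mix (S : Set E) (x : (E → Bool) × (E → Bool)) : E → Bool :=
  fun e => if e ∈ S then x.2 e else x.1 e

theorem mix_map (ν : Measure Bool) [IsProbabilityMeasure ν] (S : Set E) :
    ((Measure.pi fun _ : E => ν).prod (Measure.pi fun _ : E => ν)).map (mix S)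
      = Measure.pi fun _ : E => ν := by
  classical
  symm
  refine Measure.pi_eq ?_
  intro s hs
  rw [Measure.map_apply (measurable_of_finite _) (MeasurableSet.of_discrete)]
  have : mix S ⁻¹' (Set.univ.pi s) =
      (Set.univ.pi (fun e => if e ∈ S then Set.univ else s e)) ×ˢ
      (Set.univ.pi (fun e => if e ∈ S then s e else Set.univ)) := by
    ext x
    simp only [mix, Set.mem_preimage, Set.mem_pi, Set.mem_univ, true_imp_iff, Set.mem_prod]
    rw [← forall_and]
    refine forall_congr' fun e => ?_
    by_cases he : e ∈ S <;> simp [he]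
  rw [this, Measure.prod_prod, Measure.pi_pi, Measure.pi_pi, ← Finset.prod_mul_distrib]
  refine Finset.prod_congr rfl fun e _ => ?_
  by_cases he : e ∈ S
  · rw [if_pos he, if_pos he, measure_univ, one_mul]
  · rw [if_neg he, if_neg he, measure_univ, mul_one]

theorem mix_integral (ν : Measure Bool) [IsProbabilityMeasure ν] (S : Set E)
    (g : (E → Bool) → ℝ) :
    ∫ x, (∫ y, g (mix S (x, y)) ∂(Measure.pi fun _ : E => ν)) ∂(Measure.pi fun _ : E => ν)
      = ∫ x, g x ∂(Measure.pi fun _ : E => ν) := by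
  conv_rhs => rw [← mix_map ν S]
  rw [integral_map (measurable_of_finite _).aemeasurable
    (measurable_of_finite _).aestronglyMeasurable]
  rw [integral_prod _ (Integrable.of_finite)]

theorem hoeff {Ω : Type*} [Finite Ω] [Nonempty Ω] [MeasurableSpace Ω] [DiscreteMeasurableSpace Ω]
    (μ : Measure Ω) [IsProbabilityMeasure μ] (g : Ω → ℝ) (hg : ∀ x y, |g x - g y| ≤ 1) (t : ℝ) :
    ∫ x, Real.exp (t * g x) ∂μ ≤ Real.exp (t ^ 2 / 8) * Real.exp (t * ∫ x, g x ∂μ) := by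
  obtain ⟨x0, hx0⟩ := Finite.exists_min g
  have h := hasSubgaussianMGF_of_mem_Icc (μ := μ) (X := g) (a := g x0) (b := g x0 + 1)
    (measurable_of_finite _).aemeasurable
    (Filter.Eventually.of_forall fun x => ⟨hx0 x, by
      have := (abs_le.1 (hg x x0)).2
      linarith⟩)
  have h2 := h.mgf_le t
  have e : ∀ x, Real.exp (t * g x) =
      Real.exp (t * (g x - ∫ x, g x ∂μ)) * Real.exp (t * ∫ x, g x ∂μ) := by
    intro x
    rw [← Real.exp_add]
    ring_nf
  simp_rw [e]
  rw [integral_mul_const]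
  refine mul_le_mul_of_nonneg_right ?_ (Real.exp_pos _).le
  refine h2.trans (le_of_eq ?_)
  congr 1
  simp
  ring

theorem mgf_blocks (ν : Measure Bool) [IsProbabilityMeasure ν] (b : E → ℕ) (t : ℝ) (m : ℕ) :
    ∀ f : (E → Bool) → ℝ,
      (∀ j x y, (∀ e, b e ≠ j → x e = y e) → |f x - f y| ≤ 1) →
      (∀ x y, (∀ e, b e < m → x e = y e) → f x = f y) →
      ∫ x, Real.exp (t * f x) ∂(Measure.pi fun _ : E => ν) ≤
        Real.exp (m * (t ^ 2 / 8)) * Real.exp (t * ∫ x, f x ∂(Measure.pi fun _ : E => ν)) := by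
  induction m with
  | zero =>
    intro f _ hf
    have : ∀ x, f x = f (fun _ => true) := fun x => hf _ _ (by simp)
    simp_rw [this]
    simp
  | succ m ih =>
    intro f hb hf
    set μ := (Measure.pi fun _ : E => ν) with hμ
    set S : Set E := {e | b e = m} with hS
    have hi := ih (fun x => ∫ y, f (mix S (x, y)) ∂μ) ?_ ?_
    · rw [mix_integral ν S f] at hi
      rw [hμ, ← mix_integral ν S (fun x => Real.exp (t * f x)), ← hμ]
      calc _ ≤ ∫ x, Real.exp (t ^ 2 / 8) * Real.exp (t * ∫ y, f (mix S (x, y)) ∂μ) ∂μ := by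
            refine integral_mono Integrable.of_finite Integrable.of_finite fun x => ?_
            refine hoeff μ (fun y => f (mix S (x, y))) (fun y z => hb m _ _ ?_) t
            intro e he
            have : e ∉ S := he
            simp [mix, this]
        _ = Real.exp (t ^ 2 / 8) * ∫ x, Real.exp (t * ∫ y, f (mix S (x, y)) ∂μ) ∂μ := by
            rw [integral_const_mul]
        _ ≤ Real.exp (t ^ 2 / 8) * _ := mul_le_mul_of_nonneg_left hi (Real.exp_pos _).le
        _ = _ := by
            rw [← mul_assoc, ← Real.exp_add]
            congr 2
            push_cast
            ring
    · intro j x y hxy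
      rw [← integral_sub Integrable.of_finite Integrable.of_finite]
      have := norm_integral_le_of_norm_le_const (μ := μ) (C := 1)
        (f := fun z => f (mix S (x, z)) - f (mix S (y, z)))
        (Filter.Eventually.of_forall fun z => by
          refine hb j _ _ ?_
          intro e he
          simp [mix, hxy e he])
      simpa using this
    · intro x y hxy
      refine integral_congr_ae (Filter.Eventually.of_forall fun z => ?_)
      refine hf _ _ fun e he => ?_
      by_cases h : e ∈ S
      · simp [mix, h]
      · have h' : b e ≠ m := h
        simp [mix, h, hxy e (by omega)]

end blocks

theorem chi_subg (n : ℕ) (p : ℝ) (hp0 : 0 ≤ p) (hp1 : p ≤ 1) (m : ℕ) (hn : n = m + 2) :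
    HasSubgaussianMGF (fun ω => chi ω - ∫ ω', chi ω' ∂(gnp n p)) (((m : NNReal) + 1) / 4)
      (gnp n p) := by
  have := bern_prob p hp0 hp1
  have hpr : IsProbabilityMeasure (gnp n p) := by unfold gnp; infer_instance
  refine ⟨fun t => Integrable.of_finite, fun t => ?_⟩
  set b : Sym2 (Fin n) → ℕ := fun e => (e.sup : Fin n).val - 1 with hbdef
  have h := mgf_blocks (bernoulliMeasure p) b t (m + 1) chi ?_ ?_
  · have e : ∀ x : Sym2 (Fin n) → Bool, Real.exp (t * (chi x - ∫ ω', chi ω' ∂(gnp n p))) =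
      Real.exp (t * chi x) * Real.exp (-(t * ∫ ω', chi ω' ∂(gnp n p))) := by
      intro x
      rw [← Real.exp_add]
      ring_nf
    unfold mgf
    simp_rw [e]
    rw [integral_mul_const]
    refine (mul_le_mul_of_nonneg_right h (Real.exp_pos _).le).trans (le_of_eq ?_)
    change _ * Real.exp (t * ∫ ω', chi ω' ∂(gnp n p)) * _ = _
    rw [mul_assoc, ← Real.exp_add, ← Real.exp_add]
    congr 1
    push_cast
    ring
  · intro j x y hxy
    by_cases hj : j + 1 < n
    · refine chi_lip x y ⟨j + 1, hj⟩ fun u v huv hu hv => hxy _ ?_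
      simp only [hbdef, Sym2.sup_mk]
      rw [Fin.ext_iff.ne] at huv hu hv
      rcases le_total u v with h | h
      · rw [sup_eq_right.2 h]
        have := Fin.le_def.1 h
        simp only at hu hv
        omega
      · rw [sup_eq_left.2 h]
        have := Fin.le_def.1 h
        simp only at hu hv
        omega
    · have : x = y := by
        funext e
        refine hxy e ?_
        have := (e.sup : Fin n).isLt
        simp only [hbdef]
        omega
      simp [this]
  · intro x y hxy
    congr 1
    funext e
    refine hxy e ?_
    have := (e.sup : Fin n).isLt
    simp only [hbdef]
    omega

/-- **Concentration of the chromatic number** (Shamir–Spencer): for `G ~ G(n,p)`,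
`Pr[|χ(G) - E[χ(G)]| > λ√(n-1)] < 2·exp(-λ²/2)`. -/
theorem chromatic_number_concentration (n : ℕ) (p : ℝ) (hp0 : 0 ≤ p) (hp1 : p ≤ 1)
    {lam : ℝ} (hlam : 0 < lam) :
    gnp n p {ω | lam * Real.sqrt ((n : ℝ) - 1) < |chi ω - ∫ ω', chi ω' ∂(gnp n p)|} <
      ENNReal.ofReal (2 * Real.exp (-lam ^ 2 / 2)) := by
  have := bern_prob p hp0 hp1
  have hpr : IsProbabilityMeasure (gnp n p) := by unfold gnp; infer_instance
  rcases ((Nat.lt_or_ge n 2).imp Nat.le_of_lt_succ fun h => ⟨n - 2, by omega⟩ :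
      n ≤ 1 ∨ ∃ m, n = m + 2) with hn | ⟨m, hm⟩
  · have hc : ∀ x y : Sym2 (Fin n) → Bool, chi x = chi y := by
      intro x y
      have : graphOf x = graphOf y := by
        ext u v
        have : u = v := Fin.ext (by omega)
        simp [this]
      simp [chi, this]
    have : {ω : Sym2 (Fin n) → Bool | lam * Real.sqrt ((n : ℝ) - 1) <
        |chi ω - ∫ ω', chi ω' ∂(gnp n p)|} = ∅ := by
      ext ω
      have h2 : ∫ ω', chi ω' ∂(gnp n p) = chi ω := by
        simp_rw [hc _ ω]
        simp
      simp only [Set.mem_ofPred_eq, h2, Set.mem_empty_iff_false, iff_false, not_lt]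
      simp
      positivity
    rw [this]
    simp
    positivity
  · have hs := chi_subg n p hp0 hp1 m hm
    have hn : (n : ℝ) - 1 = m + 1 := by
      rw [hm]
      push_cast
      ring
    rw [hn]
    have hε : 0 ≤ lam * Real.sqrt ((m : ℝ) + 1) := by positivity
    have h1 := hs.measure_ge_le hε
    have h2 := hs.neg.measure_ge_le hε
    have he : -(lam * Real.sqrt ((m : ℝ) + 1)) ^ 2 / (2 * ((((m : NNReal) + 1) / 4 : NNReal) : ℝ))
        = -2 * lam ^ 2 := by
      rw [mul_pow, Real.sq_sqrt (by positivity)]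
      push_cast
      field_simp
      ring
    rw [he] at h1 h2
    rw [ENNReal.lt_ofReal_iff_toReal_lt (measure_ne_top _ _)]
    change (gnp n p).real _ < _
    calc _ ≤ (gnp n p).real ({ω | lam * Real.sqrt ((m : ℝ) + 1) ≤
              chi ω - ∫ ω', chi ω' ∂(gnp n p)} ∪ {ω | lam * Real.sqrt ((m : ℝ) + 1) ≤
              (-fun ω => chi ω - ∫ ω', chi ω' ∂(gnp n p)) ω}) := by
          refine measureReal_mono ?_
          intro ω hω
          rcases lt_abs.1 (by simpa only [Set.mem_ofPred_eq] using hω :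
            lam * Real.sqrt ((m : ℝ) + 1) < |chi ω - ∫ ω', chi ω' ∂(gnp n p)|) with h | h
          · exact Or.inl (by simpa only [Set.mem_ofPred_eq] using h.le)
          · exact Or.inr (by simpa only [Set.mem_ofPred_eq, Pi.neg_apply] using h.le)
      _ ≤ _ := measureReal_union_le _ _
      _ ≤ Real.exp (-2 * lam ^ 2) + Real.exp (-2 * lam ^ 2) := add_le_add h1 h2
      _ < 2 * Real.exp (-lam ^ 2 / 2) := by
          have : Real.exp (-2 * lam ^ 2) < Real.exp (-lam ^ 2 / 2) := by
            apply Real.exp_lt_exp.2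
            nlinarith [pow_pos hlam 2]
          linarith
end

section
/- Let c > 0 be constant, p = c/n, and G ~ G(n,p). Then the probability that G contains no triangle tends to exp(-c³/6) as n → ∞. -/
open MeasureTheory

namespace TriFree

open ProbabilityTheory (iIndepFun iIndepFun_pi)

lemma isProb {p : ℝ} (h0 : 0 ≤ p) (h1 : p ≤ 1) : IsProbabilityMeasure (bernoulliMeasure p) := by
  constructor
  simp only [bernoulliMeasure, Measure.add_apply, Measure.smul_apply, measure_univ, smul_eq_mul,
    mul_one]
  rw [← ENNReal.ofReal_add h0 (by linarith)]
  simp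

section abs
variable {E ι : Type*} [Fintype E] [DecidableEq E] [DecidableEq ι]

noncomputable def mu (E : Type*) [Fintype E] (p : ℝ) : Measure (E → Bool) :=
  Measure.pi fun _ => bernoulliMeasure p

def ev (T : Finset E) : Set (E → Bool) := {ω | ∀ e ∈ T, ω e = true}
def av (T : ι → Finset E) (S : Finset ι) : Set (E → Bool) := {ω | ∀ j ∈ S, ω ∉ ev (T j)}

lemma mu_prob {p : ℝ} (h0 : 0 ≤ p) (h1 : p ≤ 1) : IsProbabilityMeasure (mu E p) := by
  have := isProb h0 h1
  unfold mu; infer_instance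

lemma meas (s : Set (E → Bool)) : MeasurableSet s := s.toFinite.measurableSet

lemma mu_ev {p : ℝ} (h0 : 0 ≤ p) (h1 : p ≤ 1) (T : Finset E) :
    (mu E p).real (ev T) = p ^ T.card := by
  have := isProb h0 h1
  have h : ev T = Set.pi Set.univ (fun e => if e ∈ T then {true} else Set.univ) := by
    ext ω
    simp only [ev, Set.mem_setOf_eq, Set.mem_pi, Set.mem_univ, true_implies]
    refine forall_congr' fun e => ?_
    by_cases he : e ∈ T <;> simp [he]
  have hb : bernoulliMeasure p {true} = ENNReal.ofReal p := by
    simp [bernoulliMeasure]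
  have h2 : ∀ e, bernoulliMeasure p (if e ∈ T then {true} else Set.univ)
      = if e ∈ T then ENNReal.ofReal p else 1 := by
    intro e; split_ifs
    · exact hb
    · exact measure_univ
  rw [Measure.real, h, mu, Measure.pi_pi]
  simp only [h2]
  rw [Finset.prod_ite_mem, Finset.univ_inter, Finset.prod_const, ENNReal.toReal_pow,
    ENNReal.toReal_ofReal h0]

lemma indep {p : ℝ} (h0 : 0 ≤ p) (h1 : p ≤ 1) (U : Finset E) (T : ι → Finset E) (N : Finset ι)
    (hN : ∀ j ∈ N, Disjoint U (T j)) :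
    (mu E p).real (ev U ∩ av T N) = p ^ U.card * (mu E p).real (av T N) := by
  have := isProb h0 h1
  have hi : iIndepFun (fun (e : E) (ω : E → Bool) => ω e) (mu E p) :=
    iIndepFun_pi (X := fun _ x => x) (fun _ => aemeasurable_id)
  have hf := hi.indepFun_finset U Uᶜ disjoint_compl_right (fun e => measurable_pi_apply e)
  have key := hf.measure_inter_preimage_eq_mul
    {f | ∀ e, f e = true}
    {f | ∀ j ∈ N, ¬ ∀ e : (Uᶜ : Finset E), (e : E) ∈ T j → f e = true}
    (Set.toFinite _).measurableSet (Set.toFinite _).measurableSet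
  have e1 : (fun (ω : E → Bool) (i : U) => ω i) ⁻¹' {f | ∀ e, f e = true} = ev U := by
    ext ω; simp [ev]
  have e2 : (fun (ω : E → Bool) (i : (Uᶜ : Finset E)) => ω i) ⁻¹'
      {f | ∀ j ∈ N, ¬ ∀ e : (Uᶜ : Finset E), (e : E) ∈ T j → f e = true} = av T N := by
    ext ω
    simp only [av, ev, Set.mem_preimage, Set.mem_setOf_eq]
    refine forall₂_congr fun j hj => not_congr ?_
    constructor
    · intro h e he
      exact h ⟨e, Finset.mem_compl.2 fun hu => Finset.disjoint_left.1 (hN j hj) hu he⟩ he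
    · intro h e he
      exact h e he
  rw [e1, e2] at key
  rw [← mu_ev h0 h1 U, Measure.real, key, ENNReal.toReal_mul]
  rfl

lemma step {p : ℝ} (h0 : 0 ≤ p) (h1 : p ≤ 1) (T : ι → Finset E) (S : Finset ι) (i : ι)
    (hc : (T i).card = 3) (hcS : ∀ j ∈ S, (T j).card = 3)
    (hu : ∀ j ∈ S, 5 ≤ (T i ∪ T j).card) (d : ℝ)
    (hd : ((S.filter fun j => ¬ Disjoint (T i) (T j)).card : ℝ) ≤ d) :
    |(mu E p).real (av T (insert i S)) - (1 - p ^ 3) * (mu E p).real (av T S)| ≤ d * p ^ 5 := by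
  have := mu_prob (E := E) h0 h1
  set μ := mu E p
  set D := S.filter fun j => ¬ Disjoint (T i) (T j) with hD
  set N := S.filter fun j => Disjoint (T i) (T j) with hNdef
  have hsplit : μ.real (av T S) = μ.real (ev (T i) ∩ av T S) + μ.real (av T (insert i S)) := by
    rw [← measureReal_inter_add_diff (s := av T S) (meas (ev (T i))), Set.inter_comm]
    congr 2
    ext ω
    simp only [av, Set.mem_diff, Set.mem_setOf_eq, Finset.mem_insert, forall_eq_or_imp]
    tauto
  have hind : μ.real (ev (T i) ∩ av T N) = p ^ 3 * μ.real (av T N) := by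
    rw [← hc]; exact indep h0 h1 _ _ _ (fun j hj => (Finset.mem_filter.1 hj).2)
  have hSN : av T S ⊆ av T N := fun ω h j hj => h j (Finset.mem_filter.1 hj).1
  have hcov : av T N ⊆ av T S ∪ ⋃ j ∈ D, ev (T j) := by
    intro ω h
    by_cases hω : ∃ j ∈ D, ω ∈ ev (T j)
    · right; simpa using hω
    · left; intro j hj hj'
      by_cases hdj : Disjoint (T i) (T j)
      · exact h j (Finset.mem_filter.2 ⟨hj, hdj⟩) hj'
      · exact hω ⟨j, Finset.mem_filter.2 ⟨hj, hdj⟩, hj'⟩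
  have a1 : μ.real (ev (T i) ∩ av T S) ≤ p ^ 3 * μ.real (av T N) := by
    rw [← hind]; exact measureReal_mono (Set.inter_subset_inter_right _ hSN)
  have a2 : μ.real (av T N) ≤ μ.real (av T S) + D.card * p ^ 3 := by
    calc _ ≤ μ.real (av T S ∪ ⋃ j ∈ D, ev (T j)) := measureReal_mono hcov
      _ ≤ μ.real (av T S) + μ.real (⋃ j ∈ D, ev (T j)) := measureReal_union_le _ _
      _ ≤ μ.real (av T S) + ∑ j ∈ D, μ.real (ev (T j)) := by
          gcongr; exact measureReal_biUnion_finset_le _ _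
      _ = _ := by
          rw [Finset.sum_congr rfl (g := fun _ => p ^ 3)]
          · simp
          · intro j hj
            rw [mu_ev h0 h1, hcS j (Finset.mem_filter.1 hj).1]
  have a3 : p ^ 3 * μ.real (av T N) ≤ μ.real (ev (T i) ∩ av T S) + D.card * p ^ 5 := by
    rw [← hind]
    calc _ ≤ μ.real ((ev (T i) ∩ av T S) ∪ ⋃ j ∈ D, ev (T i ∪ T j)) := by
          refine measureReal_mono ?_
          rintro ω ⟨hω, h⟩
          rcases hcov h with h | h
          · exact Or.inl ⟨hω, h⟩
          · right
            simp only [Set.mem_iUnion] at h ⊢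
            obtain ⟨j, hj, hj'⟩ := h
            refine ⟨j, hj, fun e he => ?_⟩
            rcases Finset.mem_union.1 he with he | he
            · exact hω e he
            · exact hj' e he
      _ ≤ μ.real (ev (T i) ∩ av T S) + μ.real (⋃ j ∈ D, ev (T i ∪ T j)) :=
          measureReal_union_le _ _
      _ ≤ μ.real (ev (T i) ∩ av T S) + ∑ j ∈ D, μ.real (ev (T i ∪ T j)) := by
          gcongr; exact measureReal_biUnion_finset_le _ _
      _ ≤ μ.real (ev (T i) ∩ av T S) + ∑ j ∈ D, p ^ 5 := by
          gcongr with j hj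
          rw [mu_ev h0 h1]
          exact pow_le_pow_of_le_one h0 h1 (hu j (Finset.mem_filter.1 hj).1)
      _ = _ := by simp
  have a4 : μ.real (av T S) ≤ μ.real (av T N) := measureReal_mono hSN
  have p3 : 0 ≤ p ^ 3 := by positivity
  have b1 := mul_le_mul_of_nonneg_left a2 p3
  have b2 := mul_le_mul_of_nonneg_left a4 p3
  have b3 : (D.card : ℝ) * p ^ 5 ≤ d * p ^ 5 := by gcongr
  have b4 : (D.card : ℝ) * p ^ 6 ≤ D.card * p ^ 5 := by
    gcongr ?_ * ?_
    exact pow_le_pow_of_le_one h0 h1 (by norm_num)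
  rw [abs_le]
  constructor <;> nlinarith

lemma main {p : ℝ} (h0 : 0 ≤ p) (h1 : p ≤ 1) (T : ι → Finset E) (I : Finset ι)
    (hc : ∀ i ∈ I, (T i).card = 3)
    (hu : ∀ i ∈ I, ∀ j ∈ I, i ≠ j → 5 ≤ (T i ∪ T j).card) (d : ℝ)
    (hd : ∀ i ∈ I, ((I.filter fun j => ¬ Disjoint (T i) (T j)).card : ℝ) ≤ d)
    (S : Finset ι) (hS : S ⊆ I) :
    |(mu E p).real (av T S) - (1 - p ^ 3) ^ S.card| ≤ S.card * (d * p ^ 5) := by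
  have := mu_prob (E := E) h0 h1
  induction S using Finset.induction_on with
  | empty => simp [av]
  | insert i S hi ih =>
    have hiI := hS (Finset.mem_insert_self i S)
    have hSI := (Finset.subset_insert i S).trans hS
    have st := step h0 h1 T S i (hc i hiI) (fun j hj => hc j (hSI hj))
      (fun j hj => hu i hiI j (hSI hj) (by rintro rfl; exact hi hj)) d
      (le_trans (by exact_mod_cast Finset.card_le_card (Finset.filter_subset_filter _ hSI))
        (hd i hiI))
    have ih := ih hSI
    rw [Finset.card_insert_of_notMem hi, pow_succ]
    push_cast
    have q0 : 0 ≤ 1 - p ^ 3 := by linarith [pow_le_one₀ (n := 3) h0 h1]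
    have q1 : 1 - p ^ 3 ≤ 1 := by linarith [pow_nonneg h0 3]
    have h2 : |(1 - p ^ 3) * ((mu E p).real (av T S) - (1 - p ^ 3) ^ S.card)|
        ≤ S.card * (d * p ^ 5) := by
      rw [abs_mul, abs_of_nonneg q0]
      exact (mul_le_of_le_one_left (abs_nonneg _) q1).trans ih
    rw [abs_le] at *
    constructor <;> linarith [st.1, st.2, h2.1, h2.2]
end abs

def tri {n : ℕ} (s : Finset (Fin n)) : Finset (Sym2 (Fin n)) := s.offDiag.image Sym2.mk.uncurry

lemma mem_tri {n : ℕ} (s : Finset (Fin n)) (a b : Fin n) :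
    s(a, b) ∈ tri s ↔ a ∈ s ∧ b ∈ s ∧ a ≠ b := by
  simp only [tri, Finset.mem_image, Finset.mem_offDiag, Prod.exists, Function.uncurry]
  constructor
  · rintro ⟨x, y, ⟨hx, hy, hxy⟩, h⟩
    rcases Sym2.eq_iff.1 h with ⟨rfl, rfl⟩ | ⟨rfl, rfl⟩
    · exact ⟨hx, hy, hxy⟩
    · exact ⟨hy, hx, hxy.symm⟩
  · rintro h; exact ⟨a, b, h, rfl⟩

lemma card_tri {n : ℕ} (s : Finset (Fin n)) : (tri s).card = s.card.choose 2 := by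
  exact Sym2.card_image_offDiag s

lemma tri_inter {n : ℕ} (s t : Finset (Fin n)) : tri s ∩ tri t = tri (s ∩ t) := by
  ext e
  induction e with | _ a b =>
  simp only [Finset.mem_inter, mem_tri]; tauto

lemma inter_le {n : ℕ} (s t : Finset (Fin n)) (hs : s.card = 3) (ht : t.card = 3) (h : s ≠ t) :
    (s ∩ t).card ≤ 2 := by
  by_contra! hlt
  have h1 : s ∩ t = s := Finset.eq_of_subset_of_card_le Finset.inter_subset_left (by omega)
  have h2 : s ∩ t = t := Finset.eq_of_subset_of_card_le Finset.inter_subset_right (by omega)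
  exact h (h1.symm.trans h2)

lemma union_ge {n : ℕ} (s t : Finset (Fin n)) (hs : s.card = 3) (ht : t.card = 3) (h : s ≠ t) :
    5 ≤ (tri s ∪ tri t).card := by
  have h1 := Finset.card_union_add_card_inter (tri s) (tri t)
  rw [tri_inter, card_tri, card_tri, card_tri, hs, ht] at h1
  have h2 := Nat.choose_le_choose 2 (inter_le s t hs ht h)
  have h3 : Nat.choose 3 2 = 3 := rfl
  have h4 : Nat.choose 2 2 = 1 := rfl
  omega

lemma deg_le {n : ℕ} (s : Finset (Fin n)) (hs : s.card = 3) :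
    (((Finset.univ : Finset (Fin n)).powersetCard 3).filter
      fun t => ¬ Disjoint (tri s) (tri t)).card ≤ 3 * n := by
  have hsub : (((Finset.univ : Finset (Fin n)).powersetCard 3).filter
      fun t => ¬ Disjoint (tri s) (tri t)) ⊆
      (s ×ˢ (Finset.univ : Finset (Fin n))).image (fun q => insert q.2 (s.erase q.1)) := by
    intro t ht
    simp only [Finset.mem_filter, Finset.mem_powersetCard_univ] at ht
    obtain ⟨ht, hd⟩ := ht
    simp only [Finset.mem_image, Finset.mem_product, Finset.mem_univ, and_true, Prod.exists]
    by_cases hst : s = t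
    · subst hst
      obtain ⟨a, ha⟩ : s.Nonempty := Finset.card_pos.1 (by omega)
      exact ⟨a, a, ha, Finset.insert_erase ha⟩
    have hle := inter_le s t hs ht hst
    have hge : (s ∩ t).card = 2 := by
      by_contra hne
      apply hd
      rw [Finset.disjoint_iff_inter_eq_empty, tri_inter, ← Finset.card_eq_zero, card_tri]
      exact Nat.choose_eq_zero_of_lt (by omega)
    have c1 := Finset.card_sdiff_add_card_inter s t
    have c2 := Finset.card_sdiff_add_card_inter t s
    rw [Finset.inter_comm t s] at c2
    obtain ⟨a, ha⟩ := Finset.card_eq_one.1 (show (s \ t).card = 1 by omega)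
    obtain ⟨b, hb⟩ := Finset.card_eq_one.1 (show (t \ s).card = 1 by omega)
    have ha' : ∀ x, (x ∈ s ∧ x ∉ t) ↔ x = a := fun x => by
      rw [← Finset.mem_sdiff, ha, Finset.mem_singleton]
    have hb' : ∀ x, (x ∈ t ∧ x ∉ s) ↔ x = b := fun x => by
      rw [← Finset.mem_sdiff, hb, Finset.mem_singleton]
    refine ⟨a, b, ((ha' a).2 rfl).1, ?_⟩
    ext x
    rw [Finset.mem_insert, Finset.mem_erase, ← hb', Ne, ← ha']
    tauto
  refine (Finset.card_le_card hsub).trans (Finset.card_image_le.trans ?_)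
  simp [hs]

lemma event_eq (n : ℕ) : {ω : Sym2 (Fin n) → Bool | (graphOf ω).CliqueFree 3} =
    av tri ((Finset.univ : Finset (Fin n)).powersetCard 3) := by
  ext ω
  simp only [Set.mem_setOf_eq, av, SimpleGraph.CliqueFree, Finset.mem_powersetCard_univ]
  refine forall_congr' fun s => ?_
  rw [SimpleGraph.isNClique_iff, SimpleGraph.isClique_iff, Set.Pairwise]
  have : (∀ ⦃x⦄, x ∈ (s : Set (Fin n)) → ∀ ⦃y⦄, y ∈ (s : Set (Fin n)) → x ≠ y →
      (graphOf ω).Adj x y) ↔ ω ∈ ev (tri s) := by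
    constructor
    · intro h e he
      induction e with | _ a b =>
      rw [mem_tri] at he
      have := h he.1 he.2.1 he.2.2
      simp only [graphOf, SimpleGraph.fromRel_adj] at this
      rcases this.2 with h | h
      · exact h
      · rw [Sym2.eq_swap]; exact h
    · intro h x hx y hy hxy
      simp only [graphOf, SimpleGraph.fromRel_adj]
      exact ⟨hxy, Or.inl (h _ ((mem_tri s x y).2 ⟨hx, hy, hxy⟩))⟩
  rw [this]
  tauto

lemma bound (n : ℕ) {p : ℝ} (h0 : 0 ≤ p) (h1 : p ≤ 1) :
    |(gnp n p {ω | (graphOf ω).CliqueFree 3}).toReal - (1 - p ^ 3) ^ (n.choose 3)|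
      ≤ n.choose 3 * ((3 * n : ℝ) * p ^ 5) := by
  have h := main h0 h1 (tri (n := n)) (Finset.univ.powersetCard 3)
    (fun i hi => by rw [card_tri, (Finset.mem_powersetCard_univ.1 hi)]; rfl)
    (fun i hi j hj => union_ge i j (Finset.mem_powersetCard_univ.1 hi)
      (Finset.mem_powersetCard_univ.1 hj)) (3 * n)
    (fun i hi => by exact_mod_cast deg_le i (Finset.mem_powersetCard_univ.1 hi)) _ subset_rfl
  rw [← event_eq, Finset.card_powersetCard, Finset.card_univ, Fintype.card_fin] at h
  exact h

lemma choose_lim : Filter.Tendsto (fun n : ℕ => (n.choose 3 : ℝ) / (n : ℝ) ^ 3)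
    Filter.atTop (nhds (1 / 6)) := by
  have hinv := tendsto_inv_atTop_nhds_zero_nat (𝕜 := ℝ)
  have h : Filter.Tendsto (fun n : ℕ => (1 - (n : ℝ)⁻¹) * (1 - 2 * (n : ℝ)⁻¹) / 6)
      Filter.atTop (nhds ((1 - 0) * (1 - 2 * 0) / 6)) :=
    ((hinv.const_sub 1).mul ((hinv.const_mul 2).const_sub 1)).div_const 6
  norm_num at h ⊢
  refine h.congr' ?_
  filter_upwards [Filter.eventually_ge_atTop 1] with n hn
  have hn' : (n : ℝ) ≠ 0 := by positivity
  rw [Nat.cast_choose_eq_descPochhammer_div]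
  simp [descPochhammer_succ_right, Nat.factorial]
  field_simp

end TriFree

/-- For `p = c/n` with `c > 0` constant, the probability that `G ~ G(n,p)` contains no
triangle tends to `exp(-c³/6)` as `n → ∞`. -/
theorem triangle_free_probability (c : ℝ) (hc : 0 < c) :
    Filter.Tendsto
      (fun n : ℕ => (gnp n (c / n) {ω | (graphOf ω).CliqueFree 3}).toReal)
      Filter.atTop (nhds (Real.exp (-c ^ 3 / 6))) := by
  have hlim := TriFree.choose_lim
  have hmain : Filter.Tendsto (fun n : ℕ => (1 - (c / n) ^ 3) ^ (n.choose 3))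
      Filter.atTop (nhds (Real.exp (-c ^ 3 / 6))) := by
    have hpos : ∀ᶠ n : ℕ in Filter.atTop, (c / n) ^ 3 < 1 := by
      have : Filter.Tendsto (fun n : ℕ => (c / n) ^ 3) Filter.atTop (nhds (0 ^ 3)) :=
        (tendsto_const_div_atTop_nhds_zero_nat c).pow 3
      exact this.eventually_lt_const (by norm_num)
    have hx0 : Filter.Tendsto (fun n : ℕ => (c / n) ^ 3) Filter.atTop (nhds 0) := by
      simpa using (tendsto_const_div_atTop_nhds_zero_nat c).pow 3
    have hU : Filter.Tendsto (fun n : ℕ => (n.choose 3 : ℝ) * (-(c / n) ^ 3))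
        Filter.atTop (nhds (-c ^ 3 / 6)) := by
      have h := hlim.mul_const (-c ^ 3)
      rw [show 1 / 6 * (-c ^ 3) = -c ^ 3 / 6 by ring] at h
      refine h.congr fun n => ?_
      rw [div_pow]; ring
    have hL : Filter.Tendsto (fun n : ℕ => (n.choose 3 : ℝ) * (-(c / n) ^ 3) / (1 - (c / n) ^ 3))
        Filter.atTop (nhds (-c ^ 3 / 6)) := by
      have h := hU.div (hx0.const_sub 1) (by norm_num)
      rw [sub_zero, div_one] at h
      exact h
    have hlog : Filter.Tendsto (fun n : ℕ => (n.choose 3 : ℝ) * Real.log (1 - (c / n) ^ 3))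
        Filter.atTop (nhds (-c ^ 3 / 6)) := by
      refine tendsto_of_tendsto_of_tendsto_of_le_of_le' hL hU ?_ ?_
      · filter_upwards [hpos] with n hn
        have hy : 0 < 1 - (c / n) ^ 3 := by linarith
        rw [mul_div_assoc]
        refine mul_le_mul_of_nonneg_left ?_ (Nat.cast_nonneg _)
        refine le_trans (le_of_eq ?_) (Real.one_sub_inv_le_log_of_pos hy)
        rw [eq_sub_iff_add_eq, inv_eq_one_div, ← add_div, div_eq_one_iff_eq hy.ne']
        ring
      · filter_upwards [hpos] with n hn
        have hy : 0 < 1 - (c / n) ^ 3 := by linarith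
        refine mul_le_mul_of_nonneg_left ?_ (Nat.cast_nonneg _)
        linarith [Real.log_le_sub_one_of_pos hy]
    refine ((Real.continuous_exp.tendsto _).comp hlog).congr' ?_
    filter_upwards [hpos] with n hn
    have hy : 0 < 1 - (c / n) ^ 3 := by linarith
    simp only [Function.comp]
    rw [Real.exp_nat_mul, Real.exp_log hy]
  have herr : Filter.Tendsto (fun n : ℕ => (n.choose 3 : ℝ) * ((3 * n : ℝ) * (c / n) ^ 5))
      Filter.atTop (nhds 0) := by
    have h := (hlim.mul_const (3 * c ^ 5)).mul (tendsto_inv_atTop_nhds_zero_nat (𝕜 := ℝ))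
    rw [mul_zero] at h
    refine h.congr' ?_
    filter_upwards [Filter.eventually_ge_atTop 1] with n hn
    have hn' : (n : ℝ) ≠ 0 := by positivity
    field_simp
  have hdiff : Filter.Tendsto (fun n : ℕ => (gnp n (c / n) {ω | (graphOf ω).CliqueFree 3}).toReal
      - (1 - (c / n) ^ 3) ^ (n.choose 3)) Filter.atTop (nhds 0) := by
    refine squeeze_zero_norm' ?_ herr
    obtain ⟨m, hm⟩ := exists_nat_ge c
    filter_upwards [Filter.eventually_ge_atTop (max m 1)] with n hn
    have hn1 : 1 ≤ n := (le_max_right _ _).trans hn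
    have hn0 : (0 : ℝ) < n := by exact_mod_cast hn1
    have hcn : c ≤ n := hm.trans (by exact_mod_cast (le_max_left _ _).trans hn)
    exact TriFree.bound n (by positivity) ((div_le_one hn0).2 hcn)
  simpa using hdiff.add hmain
end
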